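/- Let S be a Polish space and c : S × S → [0,∞] a lower semicontinuous map. For Borel probability measures μ, ν on S let ℓ(μ,ν) := inf_{π ∈ D(μ,ν)} ∫_{S×S} c(x,y) dπ(x,y) ∈ [0,∞], where D(μ,ν) is the set of couplings of μ and ν. Then the function ℓ : P(S) × P(S) → [0,∞] is measurable with respect to the universal completion of the Borel σ-algebra of P(S) × P(S), where P(S) carries the topology of weak convergence. -/

import Mathlib

open MeasureTheory ProbabilityTheory ENNReal Set

noncomputable section

/-- The `μ`-completion of the σ-algebra `m`. -/
def muCompletion {α : Type*} (m : MeasurableSpace α) (μ : @Measure α m) : MeasurableSpace α :=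
  letI := m
  inferInstanceAs (MeasurableSpace (MeasureTheory.NullMeasurableSpace α μ))

/-- The universal completion of a σ-algebra: the intersection of the `μ`-completions
over all finite nonnegative measures `μ`. -/
def univCompletion {α : Type*} (m : MeasurableSpace α) : MeasurableSpace α :=
  ⨅ (μ : @Measure α m) (_ : @IsFiniteMeasure α m μ), muCompletion m μ

/-- `D(μ,ν)`: couplings of `μ` and `ν`. -/
def Couplings {S : Type*} [MeasurableSpace S] (μ ν : Measure S) : Set (Measure (S × S)) :=
  {π | IsProbabilityMeasure π ∧ π.map Prod.fst = μ ∧ π.map Prod.snd = ν}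

open Filter Topology in
/-- For bounded real-valued lower semicontinuous functions. -/
lemma lsc_lintegral_aux {X : Type*} [TopologicalSpace X] [PolishSpace X] [MeasurableSpace X]
    [BorelSpace X] (f : X → ℝ) (hf : LowerSemicontinuous f) (hf0 : ∀ x, 0 ≤ f x) :
    LowerSemicontinuous (fun π : ProbabilityMeasure X =>
      ∫⁻ x, ENNReal.ofReal (f x) ∂(π : Measure X)) := by
  have key : ∀ π : ProbabilityMeasure X, ∫⁻ x, ENNReal.ofReal (f x) ∂(π : Measure X)
      = ∫⁻ t in Ioi (0 : ℝ), (π : Measure X) {a : X | t < f a} := fun π =>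
    lintegral_eq_lintegral_meas_lt _ (Eventually.of_forall hf0) hf.measurable.aemeasurable
  have hcl : ∀ y : ℝ≥0∞, IsClosed ((fun π : ProbabilityMeasure X =>
      ∫⁻ x, ENNReal.ofReal (f x) ∂(π : Measure X)) ⁻¹' Iic y) := by
    intro y
    apply IsSeqClosed.isClosed
    intro u π hu hlim
    simp only [mem_preimage, mem_Iic, key] at hu ⊢
    calc ∫⁻ t in Ioi (0 : ℝ), (π : Measure X) {a : X | t < f a}
        ≤ ∫⁻ t in Ioi (0 : ℝ), liminf (fun n => (u n : Measure X) {a : X | t < f a}) atTop := by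
          refine lintegral_mono fun t => ?_
          exact ProbabilityMeasure.le_liminf_measure_open_of_tendsto hlim (hf.isOpen_preimage t)
      _ ≤ liminf (fun n => ∫⁻ t in Ioi (0 : ℝ), (u n : Measure X) {a : X | t < f a}) atTop := by
          refine lintegral_liminf_le fun n => ?_
          refine Antitone.measurable fun s t hst => measure_mono fun a ha => ?_
          exact lt_of_le_of_lt hst ha
      _ ≤ liminf (fun _ : ℕ => y) atTop := liminf_le_liminf (Eventually.of_forall hu)
      _ = y := by simp
  exact lowerSemicontinuous_iff_isClosed_preimage.2 hcl

lemma lsc_lintegral {X : Type*} [TopologicalSpace X] [PolishSpace X] [MeasurableSpace X]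
    [BorelSpace X] (c : X → ℝ≥0∞) (hc : LowerSemicontinuous c) :
    LowerSemicontinuous (fun π : ProbabilityMeasure X => ∫⁻ x, c x ∂(π : Measure X)) := by
  have hsup : ∀ x, c x = ⨆ n : ℕ, ENNReal.ofReal ((min (c x) (n : ℝ≥0∞)).toReal) := by
    intro x
    have h1 : ∀ n : ℕ, ENNReal.ofReal ((min (c x) (n : ℝ≥0∞)).toReal) = min (c x) n := fun n =>
      ENNReal.ofReal_toReal (ne_top_of_le_ne_top (ENNReal.natCast_ne_top n) (min_le_right _ _))
    simp_rw [h1]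
    have := inf_iSup_eq (c x) (fun n : ℕ => (n : ℝ≥0∞))
    rw [ENNReal.iSup_natCast, inf_top_eq] at this
    exact this
  have hl : ∀ n : ℕ, LowerSemicontinuous (fun x => (min (c x) (n : ℝ≥0∞)).toReal) := by
    intro n x y hy
    rcases lt_or_ge y 0 with h0 | h0
    · exact Filter.Eventually.of_forall fun z => lt_of_lt_of_le h0 ENNReal.toReal_nonneg
    have hfin : ∀ z, min (c z) (n : ℝ≥0∞) ≠ ∞ := fun z =>
      ne_top_of_le_ne_top (ENNReal.natCast_ne_top n) (min_le_right _ _)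
    have h2 : ENNReal.ofReal y < min (c x) n := (ENNReal.ofReal_lt_iff_lt_toReal h0 (hfin x)).2 hy
    filter_upwards [hc x _ (lt_of_lt_of_le h2 (min_le_left _ _))] with z hz
    exact (ENNReal.ofReal_lt_iff_lt_toReal h0 (hfin z)).1
      (lt_min hz (lt_of_lt_of_le h2 (min_le_right _ _)))
  have : (fun π : ProbabilityMeasure X => ∫⁻ x, c x ∂(π : Measure X)) =
      fun π : ProbabilityMeasure X => ⨆ n : ℕ,
      ∫⁻ x, ENNReal.ofReal ((min (c x) (n : ℝ≥0∞)).toReal) ∂(π : Measure X) := by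
    funext π
    rw [← lintegral_iSup (fun n => (hl n).measurable.ennreal_ofReal)]
    · exact lintegral_congr hsup
    · intro m n hmn x
      refine ENNReal.ofReal_le_ofReal (ENNReal.toReal_mono ?_ ?_)
      · exact ne_top_of_le_ne_top (ENNReal.natCast_ne_top n) (min_le_right _ _)
      · exact min_le_min le_rfl (by exact_mod_cast hmn)
  rw [this]
  exact lowerSemicontinuous_iSup fun n => lsc_lintegral_aux _ (hl n) fun _ => ENNReal.toReal_nonneg

/-- The map sending a plan to its pair of margins. -/
def marginMap (S : Type*) [TopologicalSpace S] [PolishSpace S] [MeasurableSpace S] [BorelSpace S]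
    (π : ProbabilityMeasure (S × S)) : ProbabilityMeasure S × ProbabilityMeasure S :=
  (π.map measurable_fst.aemeasurable, π.map measurable_snd.aemeasurable)

lemma isProperMap_marginMap (S : Type*) [TopologicalSpace S] [PolishSpace S] [MeasurableSpace S]
    [BorelSpace S] : IsProperMap (marginMap S) := by
  have hcont : Continuous (marginMap S) :=
    (ProbabilityMeasure.continuous_map continuous_fst).prodMk
      (ProbabilityMeasure.continuous_map continuous_snd)
  rw [isProperMap_iff_isCompact_preimage]
  refine ⟨hcont, fun K hK => ?_⟩
  letI := TopologicalSpace.upgradeIsCompletelyMetrizable S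
  have h1 : IsCompact (Prod.fst '' K) := hK.image continuous_fst
  have h2 : IsCompact (Prod.snd '' K) := hK.image continuous_snd
  have t1 := isTightMeasureSet_of_isCompact_closure (by rwa [h1.isClosed.closure_eq])
  have t2 := isTightMeasureSet_of_isCompact_closure (by rwa [h2.isClosed.closure_eq])
  have t : IsTightMeasureSet {((μ : ProbabilityMeasure (S × S)) : Measure (S × S)) |
      μ ∈ marginMap S ⁻¹' K} := by
    refine IsTightMeasureSet.prodMk (t1.subset ?_) (t2.subset ?_)
    · rintro _ ⟨_, ⟨π, hπ, rfl⟩, rfl⟩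
      exact ⟨_, ⟨_, hπ, rfl⟩, rfl⟩
    · rintro _ ⟨_, ⟨π, hπ, rfl⟩, rfl⟩
      exact ⟨_, ⟨_, hπ, rfl⟩, rfl⟩
  have := isCompact_closure_of_isTightMeasureSet t
  rwa [(hK.isClosed.preimage hcont).closure_eq] at this

lemma lsc_optimal_cost {S : Type*} [TopologicalSpace S] [PolishSpace S] [MeasurableSpace S]
    [BorelSpace S] (c : S × S → ℝ≥0∞) (hc : LowerSemicontinuous c) :
    LowerSemicontinuous (fun p : ProbabilityMeasure S × ProbabilityMeasure S =>
      ⨅ π ∈ Couplings (p.1 : Measure S) (p.2 : Measure S), ∫⁻ q, c q ∂π) := by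
  rw [lowerSemicontinuous_iff_isClosed_preimage]
  intro y
  have : (fun p : ProbabilityMeasure S × ProbabilityMeasure S =>
      ⨅ π ∈ Couplings (p.1 : Measure S) (p.2 : Measure S), ∫⁻ q, c q ∂π) ⁻¹' Iic y
      = ⋂ z ∈ Ioi y, marginMap S '' ((fun π : ProbabilityMeasure (S × S) =>
        ∫⁻ x, c x ∂(π : Measure (S × S))) ⁻¹' Iic z) := by
    ext p
    simp only [mem_preimage, mem_Iic, mem_iInter, mem_Ioi, mem_image]
    constructor
    · intro h z hz
      obtain ⟨π, hπ⟩ := iInf_lt_iff.1 (lt_of_le_of_lt h hz)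
      obtain ⟨⟨h0, h1, h2⟩, hlt⟩ := iInf_lt_iff.1 hπ
      refine ⟨⟨π, h0⟩, hlt.le, Prod.ext (Subtype.ext ?_) (Subtype.ext ?_)⟩
      · exact h1
      · exact h2
    · intro h
      refine le_of_forall_gt_imp_ge_of_dense fun z hz => ?_
      obtain ⟨π, hle, rfl⟩ := h z hz
      exact (iInf₂_le (π : Measure (S × S)) ⟨π.2, rfl, rfl⟩).trans hle
  rw [this]
  exact isClosed_biInter fun z _ => (isProperMap_marginMap S).isClosedMap _
    ((lowerSemicontinuous_iff_isClosed_preimage.1 (lsc_lintegral c hc)) z)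

lemma le_univCompletion {α : Type*} (m : MeasurableSpace α) : m ≤ univCompletion m := by
  refine le_iInf₂ fun μ _ => ?_
  intro s hs
  exact (@MeasurableSet.nullMeasurableSet α m μ s hs)

/-- **Measurability of the optimal cost**: for a lower semicontinuous cost
`c : S × S → [0,∞]`, the map `(μ,ν) ↦ inf_{π ∈ D(μ,ν)} ∫ c dπ` is measurable with
respect to the universal completion of the Borel σ-algebra of `P(S) × P(S)` (for the
topology of weak convergence). -/
theorem measurable_optimal_cost
    {S : Type*} [TopologicalSpace S] [PolishSpace S] [MeasurableSpace S] [BorelSpace S]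
    (c : S × S → ℝ≥0∞) (hc : LowerSemicontinuous c) :
    @Measurable (ProbabilityMeasure S × ProbabilityMeasure S) ℝ≥0∞
      (univCompletion (borel (ProbabilityMeasure S × ProbabilityMeasure S))) _
      (fun p => ⨅ π ∈ Couplings (p.1 : Measure S) (p.2 : Measure S), ∫⁻ q, c q ∂π) := by
  letI : MeasurableSpace (ProbabilityMeasure S × ProbabilityMeasure S) := borel _
  haveI : BorelSpace (ProbabilityMeasure S × ProbabilityMeasure S) := ⟨rfl⟩
  have h := (lsc_optimal_cost c hc).measurable
  exact h.mono (le_univCompletion _) le_rfl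

end
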